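/- arXiv:2304.11333 — 2 statements merged into one kernel-verified Lean document; each statement's English description precedes it below -/
import Mathlib

section
/- Let m ≥ 1 and let M be a nonzero linear subspace of the space of homogeneous polynomials of degree m in ℂ[x_0,…,x_n] that is invariant under the S_{n+1}-action permuting the variables. Let B = {p ∈ ℂ^{n+1} : f(p) = 0 for all f ∈ M} and let Z be an irreducible component of B for the Zariski topology. Then at least one of the following holds: (1) there is a nonempty Zariski-open subset of Z at each of whose points the n+1 coordinates take at most m distinct values, and the affine dimension of Z is at most m (equivalently, dim Z ≤ m − 1 as a subvariety of ℙ^n); or (2) Z is an irreducible component of the common zero set of finitely many homogeneous polynomials, each invariant under all permutations of the variables and each of degree at most m, and the affine dimension of Z is at least n + 1 − m (equivalently, dim Z ≥ n − m as a subvariety of ℙ^n). -/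
open MvPolynomial

/-- The Zariski topology on `ℂ^{n+1}`: the topology generated by the complements of
hypersurfaces; its closed sets are exactly the common zero sets of families of
polynomials. -/
def zariski (n : ℕ) : TopologicalSpace (Fin (n + 1) → ℂ) :=
  TopologicalSpace.generateFrom
    {U | ∃ f : MvPolynomial (Fin (n + 1)) ℂ, U = {p | eval p f ≠ 0}}

/-- `Z` is an irreducible component of `B` (for the Zariski topology): `Z` is maximal
among the irreducible subsets of `B`. -/
def IsIrredComponentOf (n : ℕ) (Z B : Set (Fin (n + 1) → ℂ)) : Prop :=
  Maximal (fun s : Set (Fin (n + 1) → ℂ) => s ⊆ B ∧ @IsIrreducible _ (zariski n) s) Z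

/-- The (affine, Krull) dimension of a subset of `ℂ^{n+1}` with the topology induced
from the Zariski topology. -/
noncomputable def zDim (n : ℕ) (s : Set (Fin (n + 1) → ℂ)) : WithBot ℕ∞ :=
  @topologicalKrullDim s (TopologicalSpace.induced Subtype.val (zariski n))

/-!
A form `f` of degree `m` can be written as `∑ F_a x^a`, where `a` runs over the staircase exponents
`a_i < n + 1 - i` and each `F_a` is a symmetric form of degree `m - |a|`. If `f` vanishes on the
`S_{n+1}`-orbit of a point `p` with more than `m` distinct coordinates, then so does the
staircase polynomial `∑ F_a(p) x^a` of degree at most `m`, and repeated division by linear factors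
in one variable after another shows that it must be zero: all `F_a` vanish at `p`.

Hence, if such points exist in `Z`, they are dense in it, so the `F_a` of all `f ∈ M` vanish on `Z`,
and `Z` is a component of the zero set of the symmetric forms of degree at most `m` vanishing on it.
These are polynomials in the first `m` elementary symmetric functions, so `Z` is a component of the
preimage of a closed set under a morphism `ℂ^{n+1} → ℂ^m`, and the dimension inequality for fibres
bounds `dim Z` below by `n + 1 - m`. If no such points exist, `Z` lies in one of the finitely many
linear subspaces cut out by the partitions of the coordinates into at most `m` blocks.
-/

/-- The exponents of the staircase (Artin) monomials `x_0^{a_0} ⋯ x_{N-1}^{a_{N-1}}`, those with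
`a_i < N - i` for all `i`; they span the polynomial ring over the symmetric polynomials. The
inequality is written additively to avoid truncated subtraction. -/
def staircase (N : ℕ) : Set (Fin N →₀ ℕ) :=
  {a | ∀ i, a i + i < N}

theorem cons_mem_staircase {N k : ℕ} {a : Fin N →₀ ℕ} :
    Finsupp.cons k a ∈ staircase (N + 1) ↔ k < N + 1 ∧ a ∈ staircase N := by
  simp [staircase, Fin.forall_fin_succ, ← add_assoc]

section Span

variable {R S : Type*} [CommRing R] [CommRing S] [Algebra R S] {N : ℕ}

theorem coeff_prod_tail_mem_adjoin (A : Subalgebra R S) (x : Fin (N + 1) → S)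
    (hx : ∀ k, (∏ j, (Polynomial.X - Polynomial.C (x j))).coeff k ∈ A) (k : ℕ) :
    (∏ j : Fin N, (Polynomial.X - Polynomial.C (x j.succ))).coeff k ∈ Algebra.adjoin A {x 0} := by
  have hdiv : ∏ j : Fin N, (Polynomial.X - Polynomial.C (x j.succ)) =
      (∏ j, (Polynomial.X - Polynomial.C (x j))) /ₘ (Polynomial.X - Polynomial.C (x 0)) := by
    rw [Fin.prod_univ_succ,
      Polynomial.mul_divByMonic_cancel_left _ (Polynomial.monic_X_sub_C _)]
  rw [hdiv, Polynomial.coeff_divByMonic_X_sub_C]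
  exact Subalgebra.sum_mem _ fun i _ => Subalgebra.mul_mem _
    (Subalgebra.pow_mem _ (Algebra.self_mem_adjoin_singleton _ _) _)
    (Subalgebra.algebraMap_mem _ (⟨_, hx i⟩ : A))

theorem toSubmodule_adjoin_singleton_eq_span_pow (A : Subalgebra R S) {p : Polynomial S}
    (hp : p.Monic) (hpA : ∀ k, p.coeff k ∈ A) {y : S} (hy : p.IsRoot y) :
    Subalgebra.toSubmodule (Algebra.adjoin A {y}) =
      Submodule.span A ((y ^ ·) '' {k | k < p.natDegree}) := by
  have hlifts : p ∈ Polynomial.lifts (algebraMap A S) :=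
    (Polynomial.lifts_iff_coeff_lifts p).2 fun k => ⟨⟨_, hpA k⟩, rfl⟩
  obtain ⟨Q, hQp, hdeg, hQ⟩ := Polynomial.lifts_and_natDegree_eq_and_monic hlifts hp
  have hroot : Polynomial.aeval y Q = 0 := by
    rwa [Polynomial.aeval_def, ← Polynomial.eval_map, hQp]
  rw [← Submodule.span_range_natDegree_eq_adjoin hQ hroot, hdeg]
  simp only [Finset.coe_image, Finset.coe_range, Set.Iio_def]

theorem mem_mul_span_of_mem_span_subalgebra (A : Subalgebra R S) {t : Set S} {y : S}
    (hy : y ∈ Submodule.span A t) : y ∈ Subalgebra.toSubmodule A * Submodule.span R t := by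
  induction hy using Submodule.span_induction with
  | mem z hz =>
    rw [← one_mul z]
    exact Submodule.mul_mem_mul (one_mem A) (Submodule.subset_span hz)
  | zero => exact zero_mem _
  | add z w _ _ hz hw => exact add_mem hz hw
  | smul c z _ hz =>
    rw [← A.isIdempotentElem_toSubmodule.eq, mul_assoc]
    exact Submodule.mul_mem_mul c.2 hz

theorem adjoin_range_le_span_staircase (A : Subalgebra R S) (x : Fin N → S)
    (hx : ∀ k, (∏ j, (Polynomial.X - Polynomial.C (x j))).coeff k ∈ A) :
    Subalgebra.toSubmodule (Algebra.adjoin A (Set.range x)) ≤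
      Submodule.span A ((fun a => ∏ i, x i ^ a i) '' staircase N) := by
  induction N generalizing A with
  | zero => simpa [staircase] using (Algebra.toSubmodule_bot.trans Submodule.one_eq_span).le
  | succ N ih =>
    intro f hf
    have hmul : f ∈ Subalgebra.toSubmodule (Algebra.adjoin A {x 0}) *
        Submodule.span A ((fun a => ∏ i, x (Fin.succ i) ^ a i) '' staircase N) := by
      rw [← Fin.cons_self_tail x, Fin.range_cons, Set.insert_eq, Subalgebra.mem_toSubmodule,
        Algebra.adjoin_union_eq_adjoin_adjoin] at hf
      exact mem_mul_span_of_mem_span_subalgebra _ <|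
        ih ((Algebra.adjoin A {x 0}).restrictScalars R) (Fin.tail x)
          (coeff_prod_tail_mem_adjoin A x hx) hf
    have hroot : (∏ j, (Polynomial.X - Polynomial.C (x j))).IsRoot (x 0) := by
      rw [Polynomial.IsRoot, Polynomial.eval_prod]
      exact Finset.prod_eq_zero (Finset.mem_univ 0) (by simp)
    have hdeg : (∏ j, (Polynomial.X - Polynomial.C (x j))).natDegree ≤ N + 1 :=
      (Polynomial.natDegree_prod_le _ _).trans <|
        (Finset.sum_le_card_nsmul _ _ 1 fun j _ => Polynomial.natDegree_X_sub_C_le _).trans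
          (by simp)
    rw [toSubmodule_adjoin_singleton_eq_span_pow A
      (Polynomial.monic_prod_of_monic _ _ fun j _ => Polynomial.monic_X_sub_C (x j)) hx hroot,
      Submodule.span_mul_span] at hmul
    refine Submodule.span_mono ?_ hmul
    rintro _ ⟨_, ⟨k, hk, rfl⟩, _, ⟨a, ha, rfl⟩, rfl⟩
    exact ⟨Finsupp.cons k a, cons_mem_staircase.2 ⟨hk.trans_le hdeg, ha⟩,
      by simp [Fin.prod_univ_succ]⟩

end Span

section HomogeneousComponent

variable {σ R : Type*} [CommSemiring R]

attribute [local instance] MvPolynomial.gradedAlgebra in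
theorem homogeneousComponent_mul_of_isHomogeneous {h : MvPolynomial σ R} {d : ℕ}
    (hh : h.IsHomogeneous d) (g : MvPolynomial σ R) (m : ℕ) :
    homogeneousComponent m (g * h) =
      if d ≤ m then homogeneousComponent (m - d) g * h else 0 := by
  have hdecompose (p : MvPolynomial σ R) (i : ℕ) : homogeneousComponent i p =
      (DirectSum.decompose (homogeneousSubmodule σ R) p i : MvPolynomial σ R) :=
    (decomposition.decompose'_apply p i).symm
  rw [hdecompose, hdecompose]
  exact DirectSum.coe_decompose_mul_of_right_mem _ m hh

end HomogeneousComponent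

section NormalForm

variable {R : Type*} [CommRing R] {N : ℕ}

theorem isSymmetric_coeff_prod_X_sub_C_X (k : ℕ) :
    ((∏ j : Fin N, (Polynomial.X - Polynomial.C (X j : MvPolynomial (Fin N) R))).coeff
      k).IsSymmetric := by
  intro σ
  change (rename (R := R) σ).toRingHom _ = _
  rw [← Polynomial.coeff_map, Polynomial.map_prod]
  congr 1
  simpa using Equiv.prod_comp σ fun j =>
    Polynomial.X - Polynomial.C (X j : MvPolynomial (Fin N) R)

theorem span_symmetricSubalgebra_staircase :
    Submodule.span (symmetricSubalgebra (Fin N) R)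
      ((fun a => monomial a (1 : R)) '' staircase N) = ⊤ := by
  refine top_le_iff.1 fun f _ => ?_
  have hadjoin : Algebra.adjoin R (Set.range (X : Fin N → MvPolynomial (Fin N) R)) ≤
      (Algebra.adjoin (symmetricSubalgebra (Fin N) R) (Set.range X)).restrictScalars R :=
    Algebra.adjoin_le Algebra.subset_adjoin
  rw [adjoin_range_X] at hadjoin
  have hf := adjoin_range_le_span_staircase (symmetricSubalgebra (Fin N) R) X
    isSymmetric_coeff_prod_X_sub_C_X (hadjoin (Algebra.mem_top (x := f)))
  have hmonomial (a : Fin N →₀ ℕ) : ∏ i, X i ^ a i = monomial a (1 : R) := by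
    simp [monomial_eq, Finsupp.prod_pow]
  simpa only [hmonomial] using hf

theorem exists_eq_sum_staircase {m : ℕ} {f : MvPolynomial (Fin N) R} (hf : f.IsHomogeneous m) :
    ∃ (A : Finset (Fin N →₀ ℕ)) (F : (Fin N →₀ ℕ) → MvPolynomial (Fin N) R),
      (∀ a ∈ A, a ∈ staircase N ∧ a.degree ≤ m) ∧
      (∀ a, (F a).IsSymmetric ∧ (F a).IsHomogeneous (m - a.degree)) ∧
      f = ∑ a ∈ A, F a * monomial a 1 := by
  have hspan : f ∈ Submodule.span (symmetricSubalgebra (Fin N) R)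
      ((fun a => monomial a (1 : R)) '' staircase N) :=
    span_symmetricSubalgebra_staircase (R := R) ▸ Submodule.mem_top
  obtain ⟨l, hl, rfl⟩ :=
    (Finsupp.mem_span_image_iff_linearCombination (symmetricSubalgebra (Fin N) R)).1 hspan
  refine ⟨l.support.filter (·.degree ≤ m),
    fun a => homogeneousComponent (m - a.degree) (l a : MvPolynomial (Fin N) R),
    fun a ha => ⟨hl (Finset.mem_filter.1 ha).1, (Finset.mem_filter.1 ha).2⟩,
    fun a => ⟨fun σ => ?_, homogeneousComponent_isHomogeneous _ _⟩, ?_⟩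
  · rw [rename_homogeneousComponent, (l a).2 σ]
  · conv_lhs => rw [← homogeneousComponent_eq_self hf]
    simp only [Finsupp.linearCombination_apply, Finsupp.sum, map_sum, Subalgebra.smul_def,
      smul_eq_mul, homogeneousComponent_mul_of_isHomogeneous (isHomogeneous_monomial (1 : R) rfl),
      Finset.sum_filter]

end NormalForm

section Interpolation

/-- The span of the staircase monomials of degree less than `k`. -/
noncomputable def staircaseSubmodule (R : Type*) [CommSemiring R] (N k : ℕ) :
    Submodule R (MvPolynomial (Fin N) R) :=
  restrictSupport R {a | a ∈ staircase N ∧ a.degree < k}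

/-- `r` vanishes at every point of `R^N` whose coordinates, counted with multiplicity, are the
elements of `s`. -/
def VanishesOnArrangements {R : Type*} [CommSemiring R] {N : ℕ} (s : Multiset R)
    (r : MvPolynomial (Fin N) R) : Prop :=
  ∀ q : Fin N → R, Finset.univ.val.map q = s → eval q r = 0

section CommRing

variable {R : Type*} [CommRing R] {N k l : ℕ}

theorem mem_staircaseSubmodule {r : MvPolynomial (Fin N) R} :
    r ∈ staircaseSubmodule R N k ↔ ∀ a ∈ r.support, a ∈ staircase N ∧ a.degree < k :=
  Iff.rfl

theorem staircaseSubmodule_mono (h : k ≤ l) :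
    staircaseSubmodule R N k ≤ staircaseSubmodule R N l :=
  restrictSupport_mono R fun _ ha => ⟨ha.1, ha.2.trans_le h⟩

theorem eq_zero_of_mem_staircaseSubmodule_zero {r : MvPolynomial (Fin N) R}
    (h : r ∈ staircaseSubmodule R N 0) : r = 0 :=
  support_eq_empty.1 <| Finset.eq_empty_of_forall_notMem fun a ha =>
    Nat.not_lt_zero _ (mem_staircaseSubmodule.1 h a ha).2

theorem coeff_finSuccEquiv_mem_staircaseSubmodule {r : MvPolynomial (Fin (N + 1)) R}
    (hr : r ∈ staircaseSubmodule R (N + 1) k) (j : ℕ) :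
    (finSuccEquiv R N r).coeff j ∈ staircaseSubmodule R N (k - j) := by
  refine mem_staircaseSubmodule.2 fun a ha => ?_
  obtain ⟨hstair, hdeg⟩ := mem_staircaseSubmodule.1 hr _ (mem_support_coeff_finSuccEquiv.1 ha)
  refine ⟨(cons_mem_staircase.1 hstair).2, ?_⟩
  rw [Finsupp.degree_eq_sum, Fin.sum_univ_succ] at hdeg
  simp only [Finsupp.cons_zero, Finsupp.cons_succ, ← Finsupp.degree_eq_sum] at hdeg
  omega

theorem degree_finSuccEquiv_lt {r : MvPolynomial (Fin (N + 1)) R}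
    (hr : r ∈ staircaseSubmodule R (N + 1) k) : (finSuccEquiv R N r).degree < ↑(N + 1) := by
  refine (Polynomial.degree_lt_iff_coeff_zero _ _).2 fun j hj => ?_
  refine support_eq_empty.1 <| Finset.eq_empty_of_forall_notMem fun a ha => hj.not_gt ?_
  exact (cons_mem_staircase.1
    (mem_staircaseSubmodule.1 hr _ (mem_support_coeff_finSuccEquiv.1 ha)).1).1

theorem eval_C_mem_staircaseSubmodule {P : Polynomial (MvPolynomial (Fin N) R)}
    (hP : ∀ j, P.coeff j ∈ staircaseSubmodule R N (k - j)) (u : R) :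
    P.eval (C u) ∈ staircaseSubmodule R N k := by
  rw [Polynomial.eval_eq_sum_range]
  refine Submodule.sum_mem _ fun j _ => ?_
  rw [← map_pow, mul_comm, ← smul_eq_C_mul]
  exact Submodule.smul_mem _ _ (staircaseSubmodule_mono (Nat.sub_le k j) (hP j))

theorem coeff_divByMonic_mem_staircaseSubmodule {P : Polynomial (MvPolynomial (Fin N) R)}
    (hP : ∀ j, P.coeff j ∈ staircaseSubmodule R N (k - j)) (u : R) (j : ℕ) :
    (P /ₘ (Polynomial.X - Polynomial.C (C u))).coeff j ∈ staircaseSubmodule R N (k - 1 - j) := by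
  rw [Polynomial.coeff_divByMonic_X_sub_C]
  refine Submodule.sum_mem _ fun i hi => ?_
  rw [← map_pow, ← smul_eq_C_mul]
  have hji : j + 1 ≤ i := (Finset.mem_Icc.1 hi).1
  exact Submodule.smul_mem _ _ (staircaseSubmodule_mono (by omega) (hP i))

theorem eval_cons_eq_eval_finSuccEquiv (v : R) (q : Fin N → R)
    (r : MvPolynomial (Fin (N + 1)) R) :
    eval (Fin.cons v q : Fin (N + 1) → R) r = eval q ((finSuccEquiv R N r).eval (C v)) := by
  rw [eval_eq_eval_mv_eval', Polynomial.eval_map, Polynomial.eval, Polynomial.hom_eval₂,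
    RingHom.comp_id, eval_C]

theorem VanishesOnArrangements.eval_finSuccEquiv {v : R} {s : Multiset R}
    {r : MvPolynomial (Fin (N + 1)) R} (h : VanishesOnArrangements (v ::ₘ s) r) :
    VanishesOnArrangements s ((finSuccEquiv R N r).eval (C v)) := fun q hq => by
  rw [← eval_cons_eq_eval_finSuccEquiv]
  refine h _ ?_
  rw [← hq, Fin.univ_succ, Finset.cons_val, Multiset.map_cons, Finset.map_val, Multiset.map_map]
  rfl

end CommRing

variable {R : Type*} [CommRing R] [IsDomain R] {N k : ℕ} {s : Multiset R}

theorem eq_zero_of_vanishesOnArrangements_of_nodup {r : MvPolynomial (Fin N) R}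
    (hs : s.card = N) (hnodup : s.Nodup) (hr : r ∈ staircaseSubmodule R N k)
    (h : VanishesOnArrangements s r) : r = 0 := by
  classical
  induction N generalizing s with
  | zero =>
    have := h Fin.elim0 (by simp [Multiset.card_eq_zero.1 hs])
    rw [eq_C_of_isEmpty r, eval_C] at this
    rw [eq_C_of_isEmpty r, this, C_0]
  | succ N ih =>
    suffices finSuccEquiv R N r = 0 from (map_eq_zero_iff _ (finSuccEquiv R N).injective).1 this
    refine Polynomial.eq_zero_of_degree_lt_of_eval_index_eq_zero s.toFinset
      (C_injective _ R).injOn ?_ fun v hv => ?_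
    · rw [Multiset.toFinset_card_of_nodup hnodup, hs]
      exact degree_finSuccEquiv_lt hr
    · obtain ⟨t, rfl⟩ := Multiset.exists_cons_of_mem (Multiset.mem_toFinset.1 hv)
      exact ih (by simpa using hs) (Multiset.nodup_cons.1 hnodup).2
        (eval_C_mem_staircaseSubmodule (coeff_finSuccEquiv_mem_staircaseSubmodule hr) v)
        h.eval_finSuccEquiv

theorem VanishesOnArrangements.eval_divByMonic {u v : R} (huv : v ≠ u)
    {P : Polynomial (MvPolynomial (Fin N) R)} (hu : P.IsRoot (C u))
    (h : VanishesOnArrangements s (P.eval (C v))) :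
    VanishesOnArrangements s ((P /ₘ (Polynomial.X - Polynomial.C (C u))).eval (C v)) := by
  intro q hq
  have hprod := h q hq
  rw [← Polynomial.mul_divByMonic_eq_iff_isRoot.2 hu, Polynomial.eval_mul, map_mul] at hprod
  refine (mul_eq_zero.1 hprod).resolve_left ?_
  simpa [sub_eq_zero] using huv

theorem eq_zero_of_vanishesOnArrangements_of_le_card_toFinset [DecidableEq R]
    {r : MvPolynomial (Fin N) R} (hs : s.card = N) (hk : k ≤ s.toFinset.card)
    (hr : r ∈ staircaseSubmodule R N k) (h : VanishesOnArrangements s r) : r = 0 := by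
  induction N generalizing k s with
  | zero =>
    obtain rfl := Multiset.card_eq_zero.1 hs
    exact eq_zero_of_vanishesOnArrangements_of_nodup hs Multiset.nodup_zero hr h
  | succ N ih =>
    by_cases hnodup : s.Nodup
    · exact eq_zero_of_vanishesOnArrangements_of_nodup hs hnodup hr h
    obtain ⟨u, t, rfl⟩ : ∃ u t, s = u ::ₘ u ::ₘ t := by
      simpa [Multiset.nodup_iff_ne_cons_cons] using hnodup
    have hcoeff := coeff_finSuccEquiv_mem_staircaseSubmodule hr
    have hroot : (finSuccEquiv R N r).IsRoot (C u) :=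
      ih (by simpa using hs) (by simpa using hk) (eval_C_mem_staircaseSubmodule hcoeff u)
        h.eval_finSuccEquiv
    have hcoeff' := coeff_divByMonic_mem_staircaseSubmodule hcoeff u
    suffices hquot : finSuccEquiv R N r /ₘ (Polynomial.X - Polynomial.C (C u)) = 0 by
      have hfactor := Polynomial.mul_divByMonic_eq_iff_isRoot.2 hroot
      rw [hquot, mul_zero] at hfactor
      exact (map_eq_zero_iff _ (finSuccEquiv R N).injective).1 hfactor.symm
    refine Polynomial.eq_zero_of_degree_lt_of_eval_index_eq_zero
      ((u ::ₘ u ::ₘ t).toFinset.erase u) (C_injective _ R).injOn ?_ fun v hv => ?_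
    · refine (Polynomial.degree_lt_iff_coeff_zero _ _).2 fun j hj => ?_
      rw [Finset.card_erase_of_mem (by simp)] at hj
      refine eq_zero_of_mem_staircaseSubmodule_zero (staircaseSubmodule_mono ?_ (hcoeff' j))
      omega
    · obtain ⟨hvu, hv⟩ := Finset.mem_erase.1 hv
      obtain ⟨t', ht'⟩ := Multiset.exists_cons_of_mem (Multiset.mem_toFinset.1 hv)
      rw [ht'] at hs hk h
      have hcard : (v ::ₘ t').toFinset.card ≤ t'.toFinset.card + 1 := by
        rw [Multiset.toFinset_cons]
        exact Finset.card_insert_le v _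
      exact ih (by simpa using hs) (by omega) (eval_C_mem_staircaseSubmodule hcoeff' v)
        (h.eval_finSuccEquiv.eval_divByMonic hvu hroot)

end Interpolation

theorem exists_perm_comp_eq_of_map_univ_eq {ι α : Type*} [Fintype ι] {p q : ι → α}
    (h : Finset.univ.val.map q = Finset.univ.val.map p) : ∃ σ : Equiv.Perm ι, p ∘ σ = q := by
  classical
  have hfiber (v : α) : Nonempty ({i // q i = v} ≃ {i // p i = v}) := by
    rw [← Fintype.card_eq, Fintype.card_subtype, Fintype.card_subtype]
    have hcount := congrArg (Multiset.count v) h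
    simp only [Multiset.count_map, eq_comm (a := v)] at hcount
    exact hcount
  exact ⟨Equiv.ofFiberEquiv fun v => (hfiber v).some,
    funext (Equiv.ofFiberEquiv_map fun v => (hfiber v).some)⟩

theorem eval_comp_perm_eq {ι R : Type*} [CommSemiring R] {F : MvPolynomial ι R}
    (hF : F.IsSymmetric) (p : ι → R) (σ : Equiv.Perm ι) : eval (p ∘ σ) F = eval p F := by
  rw [← eval_rename, hF σ]

theorem eval_eq_zero_of_eval_comp_perm_sum_eq_zero {R : Type*} [CommRing R] [IsDomain R]
    {N m : ℕ} {A : Finset (Fin N →₀ ℕ)} {F : (Fin N →₀ ℕ) → MvPolynomial (Fin N) R}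
    (hA : ∀ a ∈ A, a ∈ staircase N ∧ a.degree ≤ m) (hF : ∀ a, (F a).IsSymmetric)
    {p : Fin N → R} (hp : m < (Set.range p).ncard)
    (hv : ∀ σ : Equiv.Perm (Fin N), eval (p ∘ σ) (∑ a ∈ A, F a * monomial a 1) = 0)
    {a : Fin N →₀ ℕ} (ha : a ∈ A) : eval p (F a) = 0 := by
  classical
  set r : MvPolynomial (Fin N) R := ∑ b ∈ A, monomial b (eval p (F b)) with hr
  have hcoeff (b : Fin N →₀ ℕ) : coeff b r = if b ∈ A then eval p (F b) else 0 := by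
    simp only [hr, coeff_sum, coeff_monomial, Finset.sum_ite_eq']
  suffices hzero : r = 0 by simpa [hzero, ha] using (hcoeff a).symm
  refine eq_zero_of_vanishesOnArrangements_of_le_card_toFinset (k := m + 1)
    (s := Finset.univ.val.map p) (by simp) ?_ (mem_staircaseSubmodule.2 fun b hb => ?_) ?_
  · rwa [← Finset.image_toFinset, Finset.val_toFinset, ← Set.ncard_coe_finset, Finset.coe_image,
      Finset.coe_univ, Set.image_univ]
  · have hbA : b ∈ A := by
      by_contra hbA
      exact mem_support_iff.1 hb (by rw [hcoeff, if_neg hbA])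
    exact ⟨(hA b hbA).1, Nat.lt_succ_of_le (hA b hbA).2⟩
  · intro q hq
    obtain ⟨σ, rfl⟩ := exists_perm_comp_eq_of_map_univ_eq hq
    simpa only [hr, map_sum, map_mul, eval_monomial, one_mul, eval_comp_perm_eq (hF _)]
      using hv σ

section Height

variable {A R : Type*} [CommRing A] [CommRing R]

theorem height_eq_of_isMaximal {K : Type*} [Field K] {N : ℕ} (P : Ideal (MvPolynomial (Fin N) K))
    [P.IsMaximal] : P.height = N := by
  induction N with
  | zero =>
    have hle := Ideal.height_le_ringKrullDim_of_ne_top (Ideal.IsMaximal.ne_top ‹P.IsMaximal›)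
    rw [ringKrullDim_of_isNoetherianRing, ringKrullDim_eq_zero_of_field] at hle
    simpa using hle
  | succ N ih =>
    let e := (finSuccEquiv K N).toRingEquiv
    have : (P.map e).IsMaximal := Ideal.map_isMaximal_of_equiv e
    have : ((P.map e).under (MvPolynomial (Fin N) K)).IsMaximal :=
      Polynomial.isMaximal_comap_C_of_isJacobsonRing (P.map e)
    have : (P.map e).LiesOver ((P.map e).under (MvPolynomial (Fin N) K)) := ⟨rfl⟩
    have hsucc := Polynomial.height_eq_height_add_one
      ((P.map e).under (MvPolynomial (Fin N) K)) (P.map e)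
    rw [ih, RingEquiv.height_map] at hsucc
    exact_mod_cast hsucc

theorem exists_isMaximal_forall_le_of_mem_minimalPrimes [IsNoetherianRing R] [IsJacobsonRing R]
    {J q : Ideal R} (hq : q ∈ J.minimalPrimes) :
    ∃ P : Ideal R, P.IsMaximal ∧ q ≤ P ∧
      ∀ Q : Ideal R, Q.IsPrime → J ≤ Q → Q ≤ P → q ≤ Q := by
  have hqprime : q.IsPrime := hq.1.1
  obtain ⟨others, hothers⟩ := ((J.finite_minimalPrimes_of_isNoetherianRing R).sdiff
    (t := {q})).exists_finset_coe
  have hnot : ¬ others.inf id ≤ q := by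
    rw [hqprime.inf_le']
    rintro ⟨q', hq', hle⟩
    obtain ⟨hmin, hne⟩ : q' ∈ J.minimalPrimes \ {q} := hothers ▸ hq'
    exact hne (le_antisymm hle (hq.2 hmin.1 hle))
  obtain ⟨g, hg, hgq⟩ := SetLike.not_le_iff_exists.1 hnot
  rw [← ‹IsJacobsonRing R›.out hqprime.isRadical, Ideal.jacobson, Submodule.mem_sInf] at hgq
  push Not at hgq
  obtain ⟨P, ⟨hqP, hP⟩, hgP⟩ := hgq
  refine ⟨P, hP, hqP, fun Q hQ hJQ hQP => ?_⟩
  obtain ⟨q', hq', hle⟩ := Ideal.exists_minimalPrimes_le hJQ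
  rcases eq_or_ne q' q with rfl | hne
  · exact hle
  · have hq'others : q' ∈ others := by
      rw [← Finset.mem_coe, hothers]
      exact ⟨hq', hne⟩
    exact absurd (hQP (hle (Finset.inf_le (f := id) hq'others hg))) hgP

theorem height_le_ringKrullDim_quotient_of_forall_le {q P : Ideal R} [P.IsPrime]
    (h : ∀ Q : Ideal R, Q.IsPrime → Q ≤ P → q ≤ Q) : P.height ≤ ringKrullDim (R ⧸ q) := by
  let P' : PrimeSpectrum R := ⟨P, ‹_›⟩
  change (P'.asIdeal.height : WithBot ℕ∞) ≤ _
  rw [PrimeSpectrum.height_eq_orderHeight, Order.height_eq_krullDim_Iic, ringKrullDim_quotient]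
  exact Order.krullDim_le_of_strictMono
    (fun Q : Set.Iic P' => ⟨Q.1, h _ Q.1.2 Q.2⟩) fun _ _ hlt => hlt

-- The dimension inequality `dim X ≤ dim Y + dim (fibre)` for `Spec R → Spec A` at the point `P`.
theorem height_le_ringKrullDim_add_of_forall_le [IsNoetherianRing A] [IsNoetherianRing R]
    [Algebra A R] {J : Ideal A} {q P : Ideal R} [P.IsPrime] (hJ : J.map (algebraMap A R) ≤ P)
    (h : ∀ Q : Ideal R, Q.IsPrime → J.map (algebraMap A R) ≤ Q → Q ≤ P → q ≤ Q) :
    P.height ≤ ringKrullDim A + ringKrullDim (R ⧸ q) := by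
  let pR := (P.under A).map (algebraMap A R)
  let π := Ideal.Quotient.mk pR
  have hJpR : J.map (algebraMap A R) ≤ pR := Ideal.map_mono (Ideal.map_le_iff_le_comap.1 hJ)
  have hpRP : pR ≤ P := Ideal.map_comap_le
  have : (P.map π).IsPrime := Ideal.isPrime_map_quotientMk_of_isPrime hpRP
  have hfiber : (P.map π).height ≤ ringKrullDim ((R ⧸ pR) ⧸ q.map π) := by
    refine height_le_ringKrullDim_quotient_of_forall_le fun Q hQ hQP => ?_
    have hpRQ : pR ≤ Q.comap π := Ideal.mk_ker.symm.trans_le (Ideal.ker_le_comap π)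
    refine Ideal.map_le_iff_le_comap.2 (h _ inferInstance (hJpR.trans hpRQ) ?_)
    refine (Ideal.comap_mono hQP).trans ?_
    rw [Ideal.comap_map_quotientMk, sup_eq_right.2 hpRP]
  have hquotient : ringKrullDim ((R ⧸ pR) ⧸ q.map π) ≤ ringKrullDim (R ⧸ q) :=
    ringKrullDim_le_of_surjective (Ideal.quotientMap _ π Ideal.le_comap_map)
      (Ideal.quotientMap_surjective Ideal.Quotient.mk_surjective)
  calc (P.height : WithBot ℕ∞) ≤ (P.under A).height + (P.map π).height :=
        mod_cast Ideal.height_le_height_add_of_liesOver (P.under A) P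
    _ ≤ ringKrullDim A + ringKrullDim (R ⧸ q) :=
        add_le_add (Ideal.height_le_ringKrullDim_of_ne_top (Ideal.IsPrime.ne_top inferInstance))
          (hfiber.trans hquotient)

theorem le_ringKrullDim_add_of_mem_minimalPrimes_map [IsNoetherianRing A] {K : Type*} [Field K]
    {N : ℕ} (φ : A →+* MvPolynomial (Fin N) K) {J : Ideal A} {q : Ideal (MvPolynomial (Fin N) K)}
    (hq : q ∈ (J.map φ).minimalPrimes) :
    (N : WithBot ℕ∞) ≤ ringKrullDim A + ringKrullDim (MvPolynomial (Fin N) K ⧸ q) := by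
  obtain ⟨P, hP, hqP, h⟩ := exists_isMaximal_forall_le_of_mem_minimalPrimes hq
  algebraize [φ]
  have := height_le_ringKrullDim_add_of_forall_le (hq.1.2.trans hqP) h
  rwa [height_eq_of_isMaximal P] at this

end Height

section ElementarySymmetric

variable {σ R : Type*} [Fintype σ] [CommRing R]

theorem isHomogeneous_esymm (k : ℕ) : (esymm σ R k).IsHomogeneous k := by
  refine IsHomogeneous.sum _ _ _ fun t ht => ?_
  simpa [(Finset.mem_powersetCard.1 ht).2] using
    IsHomogeneous.prod t (X : σ → MvPolynomial σ R) (fun _ => 1) fun i _ => isHomogeneous_X R i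

theorem mem_range_aeval_esymm_of_isHomogeneous {k m : ℕ} (hkm : k ≤ m) {F : MvPolynomial σ R}
    (hsymm : F.IsSymmetric) (hF : F.IsHomogeneous k) :
    F ∈ (aeval (R := R) fun i : Fin m => esymm σ R (i + 1)).range := by
  obtain ⟨Φ, hΦ⟩ := esymmAlgHom_surjective (σ := σ) R le_rfl ⟨F, hsymm⟩
  replace hΦ : F = aeval (fun i : Fin (Fintype.card σ) => esymm σ R (i + 1)) Φ := by
    rw [← esymmAlgHom_apply, hΦ]
  have hFk : F = homogeneousComponent k F := by rw [homogeneousComponent_of_mem hF, if_pos rfl]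
  rw [hFk, hΦ, aeval_def, eval₂_eq, map_sum, algebraMap_eq]
  refine sum_mem fun b _ => ?_
  rw [homogeneousComponent_C_mul, homogeneousComponent_of_mem (IsHomogeneous.prod b.support _
    (fun i : Fin (Fintype.card σ) => ((i : ℕ) + 1) * b i)
    fun i _ => (isHomogeneous_esymm (i + 1)).pow (b i))]
  split_ifs with hk
  · refine mul_mem (Subalgebra.algebraMap_mem _ _) (prod_mem fun i hi => pow_mem ?_ _)
    have hile : ((i : ℕ) + 1) * 1 ≤ k := calc
      _ ≤ ((i : ℕ) + 1) * b i :=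
        Nat.mul_le_mul_left _ (Nat.one_le_iff_ne_zero.2 (Finsupp.mem_support_iff.1 hi))
      _ ≤ k := hk ▸ Finset.single_le_sum (f := fun i : Fin (Fintype.card σ) => ((i : ℕ) + 1) * b i)
        (fun _ _ => Nat.zero_le _) hi
    exact ⟨X ⟨i, by omega⟩, by simp⟩
  · rw [mul_zero]
    exact zero_mem _

end ElementarySymmetric

theorem ringKrullDim_mvPolynomial_fin {K : Type*} [Field K] (m : ℕ) :
    ringKrullDim (MvPolynomial (Fin m) K) = m := by
  rw [ringKrullDim_of_isNoetherianRing, ringKrullDim_eq_zero_of_field, zero_add, Nat.card_fin]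

theorem le_add_ringKrullDim_of_isSymmetric {K : Type*} [Field K] {N m : ℕ}
    {S : Set (MvPolynomial (Fin N) K)}
    (hS : ∀ F ∈ S, F.IsSymmetric ∧ ∃ k ≤ m, F.IsHomogeneous k)
    {q : Ideal (MvPolynomial (Fin N) K)} (hq : q ∈ (Ideal.span S).minimalPrimes) :
    (N : WithBot ℕ∞) ≤ m + ringKrullDim (MvPolynomial (Fin N) K ⧸ q) := by
  let φ : MvPolynomial (Fin m) K →ₐ[K] MvPolynomial (Fin N) K :=
    aeval fun i => esymm (Fin N) K (i + 1)
  have hrange : S ⊆ Set.range φ := fun F hF => by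
    obtain ⟨hsymm, k, hkm, hk⟩ := hS F hF
    exact mem_range_aeval_esymm_of_isHomogeneous hkm hsymm hk
  have hspan : (Ideal.span (φ ⁻¹' S)).map φ.toRingHom = Ideal.span S := by
    rw [Ideal.map_span]
    exact congrArg Ideal.span (Set.image_preimage_eq_of_subset hrange)
  rw [← ringKrullDim_mvPolynomial_fin (K := K) m]
  exact le_ringKrullDim_add_of_mem_minimalPrimes_map φ.toRingHom (hspan ▸ hq)

theorem isIrreducible_image_iff_of_isInducing {X Y : Type*} [TopologicalSpace X]
    [TopologicalSpace Y] {f : X → Y} (hf : Topology.IsInducing f) {s : Set X} :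
    IsIrreducible (f '' s) ↔ IsIrreducible s := by
  refine ⟨fun h => ⟨h.nonempty.of_image, ?_⟩, fun h => h.image f hf.continuous.continuousOn⟩
  intro U' V' hU' hV' hsU hsV
  obtain ⟨U, hU, rfl⟩ := hf.isOpen_iff.1 hU'
  obtain ⟨V, hV, rfl⟩ := hf.isOpen_iff.1 hV'
  rw [← Set.image_inter_nonempty_iff] at hsU hsV
  rw [← Set.preimage_inter, ← Set.image_inter_nonempty_iff]
  exact h.isPreirreducible U V hU hV hsU hsV

theorem ncard_range_le_iff_exists_factorsThrough {α β : Type*} [Finite α] {m : ℕ} {p : α → β} :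
    (Set.range p).ncard ≤ m ↔ ∃ c : α → Fin m, p.FactorsThrough c := by
  rw [← Nat.card_coe_set_eq]
  constructor
  · intro h
    let e := Finite.equivFin (Set.range p)
    refine ⟨fun i => Fin.castLE h (e (Set.rangeFactorization p i)), fun i j hij => ?_⟩
    exact congrArg Subtype.val (e.injective (Fin.castLE_injective h hij))
  · rintro ⟨c, hc⟩
    rw [← Nat.card_fin m]
    refine Nat.card_le_card_of_injective (fun x : Set.range p => c x.2.choose) fun x y hxy => ?_
    exact Subtype.ext (x.2.choose_spec.symm.trans ((hc hxy).trans y.2.choose_spec))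

theorem exists_finset_subset_forall_eval_eq_zero {σ R : Type*} [Finite σ] [CommRing R]
    [IsNoetherianRing R] (S : Set (MvPolynomial σ R)) :
    ∃ fs : Finset (MvPolynomial σ R), ↑fs ⊆ S ∧
      ∀ p, (∀ f ∈ fs, eval p f = 0) → ∀ f ∈ S, eval p f = 0 := by
  obtain ⟨fs, hfsS, hspan⟩ := Submodule.fg_span_iff_fg_span_finset_subset S |>.1
    (IsNoetherian.noetherian (Ideal.span S))
  refine ⟨fs, hfsS, fun p hp f hf => ?_⟩
  have hker : Ideal.span (fs : Set (MvPolynomial σ R)) ≤ RingHom.ker (eval p) :=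
    Ideal.span_le.2 hp
  exact hker (hspan.le (Submodule.subset_span hf))

/-- The symmetric forms of degree at most `m` that vanish on `Z`. -/
def symmetricFormsVanishingOn {n : ℕ} (m : ℕ) (Z : Set (Fin (n + 1) → ℂ)) :
    Set (MvPolynomial (Fin (n + 1)) ℂ) :=
  {g | (g.IsSymmetric ∧ ∃ k ≤ m, g.IsHomogeneous k) ∧ ∀ p ∈ Z, eval p g = 0}

section Zariski

attribute [local instance] zariski

variable {n m : ℕ} {Z : Set (Fin (n + 1) → ℂ)}

theorem isInducing_pointToPoint : Topology.IsInducing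
    (pointToPoint : (Fin (n + 1) → ℂ) → PrimeSpectrum (MvPolynomial (Fin (n + 1)) ℂ)) := by
  constructor
  rw [PrimeSpectrum.isTopologicalBasis_basic_opens.eq_generateFrom, induced_generateFrom_eq]
  refine congrArg TopologicalSpace.generateFrom (Set.ext fun U => ?_)
  simp only [Set.mem_ofPred_eq, Set.mem_image, Set.mem_range, exists_exists_eq_and]
  refine exists_congr fun f => eq_comm.trans (Eq.congr_left (Set.ext fun p => ?_))
  exact not_congr (mem_vanishingIdeal_singleton_iff p f).symm

theorem preimage_pointToPoint_zeroLocus (J : Ideal (MvPolynomial (Fin (n + 1)) ℂ)) :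
    pointToPoint ⁻¹' PrimeSpectrum.zeroLocus (J : Set (MvPolynomial (Fin (n + 1)) ℂ)) =
      zeroLocus ℂ J :=
  Set.ext fun _ => forall₂_congr fun f _ => mem_vanishingIdeal_singleton_iff _ f

theorem isClosed_zeroLocus (J : Ideal (MvPolynomial (Fin (n + 1)) ℂ)) :
    IsClosed (zeroLocus ℂ J) := by
  rw [← preimage_pointToPoint_zeroLocus]
  exact (PrimeSpectrum.isClosed_zeroLocus _).preimage isInducing_pointToPoint.continuous

theorem zeroLocus_vanishingIdeal_eq_closure :
    zeroLocus ℂ (vanishingIdeal ℂ Z) = closure Z := by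
  rw [isInducing_pointToPoint.closure_eq_preimage_closure_image,
    ← PrimeSpectrum.zeroLocus_vanishingIdeal_eq_closure, vanishingIdeal_pointToPoint,
    preimage_pointToPoint_zeroLocus]

theorem isIrreducible_iff_isPrime_vanishingIdeal :
    IsIrreducible Z ↔ (vanishingIdeal ℂ Z).IsPrime := by
  rw [← isIrreducible_image_iff_of_isInducing isInducing_pointToPoint,
    PrimeSpectrum.isIrreducible_iff_vanishingIdeal_isPrime, vanishingIdeal_pointToPoint]

theorem isIrreducible_zeroLocus (P : Ideal (MvPolynomial (Fin (n + 1)) ℂ)) [P.IsPrime] :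
    IsIrreducible (zeroLocus ℂ P) := by
  rwa [isIrreducible_iff_isPrime_vanishingIdeal, IsPrime.vanishingIdeal_zeroLocus]

theorem IsIrredComponentOf.isClosed {B : Set (Fin (n + 1) → ℂ)} (hZ : IsIrredComponentOf n Z B)
    (hB : IsClosed B) : IsClosed Z :=
  isClosed_of_closure_subset <|
    hZ.2 ⟨closure_minimal hZ.1.1 hB, hZ.1.2.closure⟩ subset_closure

theorem IsIrredComponentOf.vanishingIdeal_mem_minimalPrimes
    {J : Ideal (MvPolynomial (Fin (n + 1)) ℂ)} (hZ : IsIrredComponentOf n Z (zeroLocus ℂ J)) :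
    vanishingIdeal ℂ Z ∈ J.minimalPrimes := by
  refine ⟨⟨isIrreducible_iff_isPrime_vanishingIdeal.1 hZ.1.2,
    le_zeroLocus_iff_le_vanishingIdeal.1 hZ.1.1⟩, fun P ⟨hP, hJP⟩ hPZ => ?_⟩
  have hZP : zeroLocus ℂ P ⊆ Z := hZ.2 ⟨zeroLocus_anti_mono hJP, isIrreducible_zeroLocus P⟩
    (le_zeroLocus_iff_le_vanishingIdeal.2 hPZ)
  calc vanishingIdeal ℂ Z ≤ vanishingIdeal ℂ (zeroLocus ℂ P) := vanishingIdeal_anti_mono hZP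
    _ = P := IsPrime.vanishingIdeal_zeroLocus P

theorem zeroLocus_subset_zeroLocus_iff_le {I P : Ideal (MvPolynomial (Fin (n + 1)) ℂ)}
    [P.IsPrime] : zeroLocus ℂ P ⊆ zeroLocus ℂ I ↔ I ≤ P :=
  le_zeroLocus_iff_le_vanishingIdeal.trans (by rw [IsPrime.vanishingIdeal_zeroLocus])

theorem ringKrullDim_quotient_vanishingIdeal_le_zDim (hZ : IsClosed Z) :
    ringKrullDim (MvPolynomial (Fin (n + 1)) ℂ ⧸ vanishingIdeal ℂ Z) ≤ zDim n Z := by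
  let I : Ideal (MvPolynomial (Fin (n + 1)) ℂ) := vanishingIdeal ℂ Z
  have hsubset (P : PrimeSpectrum.zeroLocus (I : Set (MvPolynomial (Fin (n + 1)) ℂ))) :
      zeroLocus ℂ P.1.asIdeal ⊆ Z := calc
    zeroLocus ℂ P.1.asIdeal ⊆ zeroLocus ℂ I := zeroLocus_anti_mono P.2
    _ = Z := by rw [zeroLocus_vanishingIdeal_eq_closure, hZ.closure_eq]
  rw [ringKrullDim_quotient, ← Order.krullDim_orderDual]
  refine Order.krullDim_le_of_strictMono (fun P =>
    { carrier := Subtype.val ⁻¹' zeroLocus ℂ (OrderDual.ofDual P).1.asIdeal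
      isIrreducible' := ?_
      isClosed' := (isClosed_zeroLocus _).preimage continuous_subtype_val })
    (strictMono_of_le_iff_le fun P Q => ?_)
  · rw [← isIrreducible_image_iff_of_isInducing Topology.IsInducing.subtypeVal,
      Subtype.image_preimage_coe, Set.inter_eq_right.2 (hsubset _)]
    exact isIrreducible_zeroLocus _
  · refine zeroLocus_subset_zeroLocus_iff_le.symm.trans ?_
    refine (Set.preimage_subset_preimage_iff ?_).symm
    rw [Subtype.range_coe]
    exact hsubset _

theorem zDim_le_of_factorsThrough {c : Fin (n + 1) → Fin m}
    (hc : ∀ p ∈ Z, p.FactorsThrough c) : zDim n Z ≤ m := by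
  let f (p : Z) : PrimeSpectrum (MvPolynomial (Fin m) ℂ) :=
    PrimeSpectrum.comap (rename (R := ℂ) (Function.invFun c)).toRingHom (pointToPoint p.1)
  have hf : Topology.IsInducing f := by
    refine .of_comp (g := PrimeSpectrum.comap (rename (R := ℂ) c).toRingHom)
      ?_ (PrimeSpectrum.continuous_comap _) ?_
    · exact (PrimeSpectrum.continuous_comap _).comp
        (isInducing_pointToPoint.continuous.comp continuous_subtype_val)
    · convert isInducing_pointToPoint.comp Topology.IsInducing.subtypeVal using 1
      refine funext fun p => PrimeSpectrum.ext (Ideal.ext fun g => ?_)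
      have : p.1 ∘ Function.invFun c ∘ c = p.1 :=
        funext fun i => hc p p.2 (Function.invFun_eq ⟨i, rfl⟩)
      simp [f, pointToPoint, rename_rename, aeval_rename, this]
  calc zDim n Z ≤ topologicalKrullDim (PrimeSpectrum (MvPolynomial (Fin m) ℂ)) :=
        hf.topologicalKrullDim_le
    _ = m := by
      rw [PrimeSpectrum.topologicalKrullDim_eq_ringKrullDim, ringKrullDim_mvPolynomial_fin]

theorem isClosed_setOf_factorsThrough (c : Fin (n + 1) → Fin m) :
    IsClosed {p : Fin (n + 1) → ℂ | p.FactorsThrough c} := by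
  have hzero : {p : Fin (n + 1) → ℂ | p.FactorsThrough c} =
      ⋂ (i) (j) (_ : c i = c j), zeroLocus ℂ (Ideal.span {(X i - X j : MvPolynomial _ ℂ)}) := by
    ext p
    simp [Function.FactorsThrough, zeroLocus_span, sub_eq_zero]
  rw [hzero]
  exact isClosed_iInter fun i => isClosed_iInter fun j => isClosed_iInter fun _ =>
    isClosed_zeroLocus _

theorem isOpen_setOf_lt_ncard_range (m : ℕ) :
    IsOpen {p : Fin (n + 1) → ℂ | m < (Set.range p).ncard} := by
  simp only [← isClosed_compl_iff, Set.compl_ofPred, not_lt,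
    ncard_range_le_iff_exists_factorsThrough, Set.ofPred_exists]
  exact isClosed_iUnion_of_finite isClosed_setOf_factorsThrough

theorem exists_forall_factorsThrough_of_isIrreducible (hZ : IsIrreducible Z)
    (hm : ∀ p ∈ Z, (Set.range p).ncard ≤ m) :
    ∃ c : Fin (n + 1) → Fin m, ∀ p ∈ Z, p.FactorsThrough c := by
  let F (c : Fin (n + 1) → Fin m) : Set (Fin (n + 1) → ℂ) := {p | p.FactorsThrough c}
  obtain ⟨t, ht, hZt⟩ := isIrreducible_iff_sUnion_isClosed.1 hZ (Finset.univ.image F)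
    (by simpa using isClosed_setOf_factorsThrough)
    (fun p hp => by simpa [F] using ncard_range_le_iff_exists_factorsThrough.1 (hm p hp))
  simp only [Finset.mem_image, Finset.mem_univ, true_and] at ht
  obtain ⟨c, rfl⟩ := ht
  exact ⟨c, hZt⟩

theorem zDim_le_of_ncard_range_le (hZ : IsIrreducible Z)
    (hm : ∀ p ∈ Z, (Set.range p).ncard ≤ m) : zDim n Z ≤ m :=
  let ⟨_, hc⟩ := exists_forall_factorsThrough_of_isIrreducible hZ hm
  zDim_le_of_factorsThrough hc

theorem natCast_sub_le_zDim_of_isIrredComponentOf {S : Set (MvPolynomial (Fin (n + 1)) ℂ)}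
    (hS : ∀ f ∈ S, f.IsSymmetric ∧ ∃ k ≤ m, f.IsHomogeneous k)
    (hZ : IsIrredComponentOf n Z {p | ∀ f ∈ S, eval p f = 0}) :
    ((n + 1 - m : ℕ) : ℕ∞) ≤ zDim n Z := by
  replace hZ : IsIrredComponentOf n Z (zeroLocus ℂ (Ideal.span S)) := by
    simpa only [zeroLocus_span, aeval_eq_eval] using hZ
  have hdim := (le_add_ringKrullDim_of_isSymmetric hS hZ.vanishingIdeal_mem_minimalPrimes).trans
    (add_le_add_right
      (ringKrullDim_quotient_vanishingIdeal_le_zDim (hZ.isClosed (isClosed_zeroLocus _))) _)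
  generalize zDim n Z = d at hdim ⊢
  induction d with
  | bot => simp at hdim
  | coe d =>
    rw [WithBot.coe_le_coe, ENat.natCast_sub]
    exact tsub_le_iff_left.2 (mod_cast hdim)

theorem eval_coeff_eq_zero_of_isIrreducible (hZ : IsIrreducible Z)
    (hZm : ∃ p ∈ Z, m < (Set.range p).ncard) {A : Finset (Fin (n + 1) →₀ ℕ)}
    (hA : ∀ a ∈ A, a ∈ staircase (n + 1) ∧ a.degree ≤ m)
    {F : (Fin (n + 1) →₀ ℕ) → MvPolynomial (Fin (n + 1)) ℂ} (hF : ∀ a, (F a).IsSymmetric)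
    (hv : ∀ p ∈ Z, ∀ σ : Equiv.Perm (Fin (n + 1)),
      eval (p ∘ σ) (∑ a ∈ A, F a * monomial a 1) = 0)
    {a : Fin (n + 1) →₀ ℕ} (ha : a ∈ A) {p : Fin (n + 1) → ℂ} (hp : p ∈ Z) :
    eval p (F a) = 0 := by
  have hdense :=
    subset_closure_inter_of_isPreirreducible_of_isOpen hZ.2 (isOpen_setOf_lt_ncard_range m) hZm
  have hzero : Z ∩ {p | m < (Set.range p).ncard} ⊆ zeroLocus ℂ (Ideal.span {F a}) := by
    rintro p ⟨hpZ, hpm⟩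
    simpa [zeroLocus_span] using
      eval_eq_zero_of_eval_comp_perm_sum_eq_zero hA hF hpm (hv p hpZ) ha
  simpa [zeroLocus_span] using closure_minimal hzero (isClosed_zeroLocus _) (hdense hp)

theorem eval_eq_zero_of_forall_symmetricFormsVanishingOn (hZ : IsIrreducible Z)
    (hZm : ∃ p ∈ Z, m < (Set.range p).ncard) {f : MvPolynomial (Fin (n + 1)) ℂ}
    (hf : f.IsHomogeneous m)
    (hfZ : ∀ p ∈ Z, ∀ σ : Equiv.Perm (Fin (n + 1)), eval (p ∘ σ) f = 0)
    {q : Fin (n + 1) → ℂ} (hq : ∀ g ∈ symmetricFormsVanishingOn m Z, eval q g = 0) :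
    eval q f = 0 := by
  obtain ⟨A, F, hA, hF, rfl⟩ := exists_eq_sum_staircase hf
  rw [map_sum]
  refine Finset.sum_eq_zero fun a ha => ?_
  rw [map_mul, hq (F a) ⟨⟨(hF a).1, _, Nat.sub_le _ _, (hF a).2⟩, fun p hp =>
    eval_coeff_eq_zero_of_isIrreducible hZ hZm hA (fun a => (hF a).1) hfZ ha hp⟩, zero_mul]

end Zariski

/-- Proposition 4.5: let `M` be a nonzero `S_{n+1}`-invariant linear system of
homogeneous polynomials of degree `m`, `B` its base locus in `ℂ^{n+1}`, and `Z` an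
irreducible component of `B`.  Then either (1) at each point of a nonempty (relatively)
open subset of `Z` the coordinates take at most `m` distinct values and the affine
dimension of `Z` is at most `m`, or (2) `Z` is an irreducible component of a
set-theoretic intersection of `S_{n+1}`-invariant hypersurfaces of degree at most `m`,
and the affine dimension of `Z` is at least `n + 1 − m`. -/
theorem stmt_4 (n m : ℕ) (hn : 1 ≤ n) (hm : 1 ≤ m)
    (M : Submodule ℂ (MvPolynomial (Fin (n + 1)) ℂ)) (hM0 : M ≠ ⊥)
    (hMhom : ∀ f ∈ M, f.IsHomogeneous m)
    (hMinv : ∀ σ : Equiv.Perm (Fin (n + 1)), ∀ f ∈ M, rename (⇑σ) f ∈ M)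
    (B : Set (Fin (n + 1) → ℂ)) (hB : B = {p | ∀ f ∈ M, eval p f = 0})
    (Z : Set (Fin (n + 1) → ℂ)) (hZ : IsIrredComponentOf n Z B) :
    ((∃ U : Set (Fin (n + 1) → ℂ), (zariski n).IsOpen U ∧ (U ∩ Z).Nonempty ∧
        ∀ p ∈ U ∩ Z, (Set.range p).ncard ≤ m) ∧
      zDim n Z ≤ (m : ℕ∞)) ∨
    (∃ fs : Finset (MvPolynomial (Fin (n + 1)) ℂ),
      (∀ f ∈ fs, (∀ σ : Equiv.Perm (Fin (n + 1)), rename (⇑σ) f = f) ∧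
        ∃ k ≤ m, f.IsHomogeneous k) ∧
      IsIrredComponentOf n Z {p | ∀ f ∈ fs, eval p f = 0} ∧
      ((n + 1 - m : ℕ) : ℕ∞) ≤ zDim n Z) := by
  subst hB
  by_cases hfew : ∀ p ∈ Z, (Set.range p).ncard ≤ m
  · exact .inl ⟨⟨Set.univ, (zariski n).isOpen_univ, by simpa using hZ.1.2.1,
      fun p hp => hfew p hp.2⟩, zDim_le_of_ncard_range_le hZ.1.2 hfew⟩
  · push Not at hfew
    obtain ⟨fs, hfs, hzero⟩ :=
      exists_finset_subset_forall_eval_eq_zero (symmetricFormsVanishingOn m Z)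
    have horbit : ∀ f ∈ M, ∀ p ∈ Z, ∀ σ : Equiv.Perm (Fin (n + 1)), eval (p ∘ σ) f = 0 := by
      intro f hf p hp σ
      rw [← eval_rename]
      exact hZ.1.1 hp _ (hMinv σ f hf)
    have hbase : {p | ∀ f ∈ fs, eval p f = 0} ⊆ {p | ∀ f ∈ M, eval p f = 0} :=
      fun q hq f hf => eval_eq_zero_of_forall_symmetricFormsVanishingOn hZ.1.2 hfew
        (hMhom f hf) (horbit f hf) (hzero q hq)
    have hcomponent : IsIrredComponentOf n Z {p | ∀ f ∈ fs, eval p f = 0} :=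
      hZ.mono (fun s hs => ⟨hs.1.trans hbase, hs.2⟩)
        ⟨fun p hp f hf => (hfs hf).2 p hp, hZ.1.2⟩
    exact .inr ⟨fs, fun f hf => (hfs hf).1, hcomponent,
      natCast_sub_le_zDim_of_isIrredComponentOf (fun f hf => (hfs hf).1) hcomponent⟩
end

section
/- Let v ∈ ℂ^5 be nonzero with v_0² + v_1² + v_2² + v_3² + v_4² = 0, so that the point [v] lies on the smooth quadric threefold Q ⊂ ℙ^4, and let O(v) = { ℂ·(v∘σ) : σ ∈ S_5 } be the set of complex lines spanned by the coordinate permutations of v, whose cardinality is the length of the S_5-orbit of [v] in Q. Fix i ∈ ℂ with i² = −1 and α ∈ ℂ with α² = −3/2. If |O(v)| < 20, then there exist σ ∈ S_5 and c ∈ ℂ \ {0} such that v∘σ = c·w, where w is one of the four vectors (2i,1,1,1,1), (−2i,1,1,1,1), (α,α,1,1,1), (−α,−α,1,1,1). Moreover, each of these four vectors satisfies the quadric equation, the corresponding four orbits have cardinalities 5, 5, 10, 10 respectively, and they are pairwise disjoint. -/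
/-- The set of complex lines `ℂ·(v∘σ)`, `σ ∈ S₅`, spanned by the coordinate
permutations of `v`; its cardinality is the length of the `S₅`-orbit of the
projective point `[v]`. -/
def orb (v : Fin 5 → ℂ) : Set (Set (Fin 5 → ℂ)) :=
  Set.range fun σ : Equiv.Perm (Fin 5) => {w | ∃ c : ℂ, w = c • (v ∘ ⇑σ)}

/-!
Let `H` be the stabilizer of `[v]` in `S₅`, acting on the line `ℂ·v` through a character `χ` whose
kernel is the stabilizer of `v`. If the coordinate values of `v` have multiplicities `n_z`, then
`|H| = (∏ n_z!)·|im χ|`, and the orbit of `[v]` has length `120 / |H|`.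

If `χ = 1`, a length below `20` forces `∏ n_z! > 6`, so `v` has at most two coordinate values, with
multiplicities `1 + 4` or `2 + 3`, and the quadric equation determines their ratio.

If `χ ≠ 1`, the elementary symmetric functions `e_k` of the coordinates satisfy `e_k = χ(g)^k e_k`.
Hence `e₁ = 0`, the quadric gives `e₂ = 0`, and as `3, 4, 5` are pairwise coprime exactly one `e_k`
with `k ∈ {3, 4, 5}` survives. By Vieta the coordinates are the roots of `X^(5-k) (X^k - a)`, whence
`|H| ≤ (5 - k)!·k ≤ 6` and the orbit has length at least `20`.

Each of the four special vectors has nonzero coordinate sum `e₁`, so `χ = 1` and its orbit has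
length `120 / ∏ n_z!`. Each equals `1` in a majority of its coordinates, so two of them with the
same orbit differ by a permutation without rescaling; but their coordinate sums are distinct.
-/

open Equiv Finset MulAction Polynomial Projectivization
open scoped LinearAlgebra.Projectivization Nat

section StabilizerCharacter

variable {G K V : Type*} [Group G] [Field K] [AddCommGroup V] [Module K V]
  [DistribMulAction G V] [SMulCommClass G K V] {v : V} (hv : v ≠ 0)

lemma mem_stabilizer_mk_iff {g : G} :
    g ∈ stabilizer G (mk K v hv) ↔ ∃ c : Kˣ, c • v = g • v := by
  rw [mem_stabilizer_iff, smul_mk, mk_eq_mk_iff]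

variable (G K) in
/-- The character by which the stabilizer of the projective point `[v]` acts on the line spanned
by `v`. -/
noncomputable def stabilizerCharacter : stabilizer G (mk K v hv) →* Kˣ :=
  .mk' (fun g ↦ ((mem_stabilizer_mk_iff hv).1 g.2).choose) fun g h ↦ by
    have spec (g : stabilizer G (mk K v hv)) := ((mem_stabilizer_mk_iff hv).1 g.2).choose_spec
    have mul_spec (c d : Kˣ) (hc : c • v = (g : G) • v) (hd : d • v = (h : G) • v) :
        (c * d) • v = ((g * h : stabilizer G (mk K v hv)) : G) • v := by
      rw [Subgroup.coe_mul, mul_smul (g : G), ← hd, Units.smul_def d, smul_comm (g : G), ← hc,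
        mul_comm c d, mul_smul d c, Units.smul_def d]
    exact Units.ext (smul_left_injective K hv
      ((spec (g * h)).trans (mul_spec _ _ (spec g) (spec h)).symm))

lemma stabilizerCharacter_smul (g : stabilizer G (mk K v hv)) :
    stabilizerCharacter G K hv g • v = (g : G) • v :=
  ((mem_stabilizer_mk_iff hv).1 g.2).choose_spec

lemma stabilizerCharacter_eq_one_iff {g : stabilizer G (mk K v hv)} :
    stabilizerCharacter G K hv g = 1 ↔ (g : G) ∈ stabilizer G v := by
  rw [mem_stabilizer_iff, ← stabilizerCharacter_smul hv g, Units.smul_def, ← Units.val_eq_one]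
  refine ⟨fun h ↦ by rw [h, one_smul], fun h ↦ smul_left_injective K hv ?_⟩
  simpa only [one_smul] using h

lemma stabilizer_le_stabilizer_mk : stabilizer G v ≤ stabilizer G (Projectivization.mk K v hv) :=
  fun _ hg ↦ (mem_stabilizer_mk_iff hv).2 ⟨1, by rw [one_smul, mem_stabilizer_iff.1 hg]⟩

lemma ker_stabilizerCharacter :
    (stabilizerCharacter G K hv).ker = (stabilizer G v).subgroupOf (stabilizer G (mk K v hv)) :=
  Subgroup.ext fun _ ↦ stabilizerCharacter_eq_one_iff hv

lemma card_stabilizer_mk :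
    Nat.card (stabilizer G (mk K v hv)) =
      Nat.card (stabilizer G v) * Nat.card (stabilizerCharacter G K hv).range := by
  rw [← Subgroup.card_mul_index (stabilizerCharacter G K hv).ker, Subgroup.index_ker,
    ker_stabilizerCharacter,
    Nat.card_congr (Subgroup.subgroupOfEquivOfLe (stabilizer_le_stabilizer_mk (K := K) hv)).toEquiv]

end StabilizerCharacter

section Coordinates

variable {ι α : Type*} [Fintype ι]

lemma count_map_univ [DecidableEq α] (f : ι → α) (a : α) :
    (univ.val.map f).count a = Fintype.card {i // f i = a} := by
  rw [Multiset.count_map, Fintype.card_subtype]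
  simp only [eq_comm]
  rfl

lemma exists_perm_comp_eq_of_map_univ_eq_s7 {f g : ι → α}
    (h : univ.val.map f = univ.val.map g) : ∃ σ : Perm ι, f ∘ σ = g := by
  classical
  have fiberEquiv (a : α) : Nonempty ({i // g i = a} ≃ {i // f i = a}) := by
    rw [← Fintype.card_eq, ← count_map_univ g, ← count_map_univ f, h]
  exact ⟨ofFiberEquiv fun a ↦ (fiberEquiv a).some, funext fun i ↦ ofFiberEquiv_map _ i⟩

lemma card_stabilizer_eq_prod_count_factorial [DecidableEq α] (f : ι → α) :
    Nat.card (stabilizer (Perm ι)ᵈᵐᵃ f) =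
      ∏ a ∈ (univ.val.map f).toFinset, ((univ.val.map f).count a)! := by
  classical
  simp only [count_map_univ]
  rw [← Finset.image, ← DomMulAct.stabilizer_card' f, ← Nat.card_eq_fintype_card]
  exact Nat.card_congr (subtypeEquiv DomMulAct.mk.symm fun _ ↦ DomMulAct.mem_stabilizer_iff)

end Coordinates

section ElementarySymmetric

lemma esymm_one_map_univ {ι R : Type*} [Fintype ι] [CommSemiring R] (v : ι → R) :
    (univ.val.map v).esymm 1 = ∑ i, v i := by
  rw [← MvPolynomial.aeval_esymm_eq_multiset_esymm ι R, MvPolynomial.esymm_one, map_sum]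
  simp only [MvPolynomial.aeval_X]

lemma two_mul_esymm_two_map_univ {ι R : Type*} [Fintype ι] [CommRing R] (v : ι → R) :
    2 * (univ.val.map v).esymm 2 = (∑ i, v i) ^ 2 - ∑ i, v i ^ 2 := by
  have indices : ({a ∈ antidiagonal 2 | a.1 < 2} : Finset (ℕ × ℕ)) = {(0, 2), (1, 1)} := rfl
  have newton : 2 * MvPolynomial.esymm ι R 2 =
      (∑ i, MvPolynomial.X i) ^ 2 - ∑ i, MvPolynomial.X i ^ 2 := by
    have := MvPolynomial.mul_esymm_eq_sum ι R 2
    rw [indices, sum_pair (by decide), MvPolynomial.esymm_zero, MvPolynomial.esymm_one,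
      MvPolynomial.psum_one, MvPolynomial.psum] at this
    linear_combination this
  simpa only [map_mul, map_sub, map_pow, map_sum, map_ofNat, MvPolynomial.aeval_X,
    MvPolynomial.aeval_esymm_eq_multiset_esymm] using congrArg (MvPolynomial.aeval v) newton

section Domain

variable {R : Type*} [CommRing R] [IsDomain R] {s : Multiset R}

lemma pow_eq_one_of_esymm_ne_zero {c : R} (hc : s.map (c • ·) = s) {k : ℕ}
    (hk : s.esymm k ≠ 0) : c ^ k = 1 :=
  mul_right_cancel₀ hk <| by rw [one_mul, ← smul_eq_mul, Multiset.pow_smul_esymm, hc]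

lemma eq_replicate_add_nthRoots_of_esymm_eq_zero {k : ℕ} (hk0 : 0 < k) (hks : k ≤ s.card)
    (hs : ∀ j, 0 < j → j ≤ s.card → j ≠ k → s.esymm j = 0) :
    s = .replicate (s.card - k) 0 + nthRoots k ((-1) ^ (k + 1) * s.esymm k) := by
  have vieta : (s.map (X - C ·)).prod =
      X ^ (s.card - k) * (X ^ k - C ((-1) ^ (k + 1) * s.esymm k)) := by
    have esymm_zero : s.esymm 0 = 1 := by simp [Multiset.esymm]
    rw [Multiset.prod_X_sub_X_eq_sum_esymm, sum_eq_add_of_mem 0 k (by simp)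
      (by simpa [Nat.lt_succ_iff] using hks) hk0.ne fun j hj hj0k ↦ ?_, esymm_zero]
    · rw [mul_sub, ← pow_add, Nat.sub_add_cancel hks]
      simp only [map_mul, map_pow, map_neg, map_one, tsub_zero]
      ring
    · rw [hs j (by lia) (by simpa [Nat.lt_succ_iff] using hj) hj0k.2, map_zero, zero_mul, mul_zero]
  have vieta_ne_zero : (X ^ (s.card - k) * (X ^ k - C ((-1) ^ (k + 1) * s.esymm k)) : R[X]) ≠ 0 :=
    mul_ne_zero (pow_ne_zero _ X_ne_zero) (X_pow_sub_C_ne_zero hk0 _)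
  rw [nthRoots, ← Multiset.nsmul_singleton, ← roots_X_pow, ← roots_mul vieta_ne_zero, ← vieta,
    roots_multiset_prod_X_sub_C]

lemma exists_esymm_ne_zero {z : R} (hz : z ∈ s) (hz0 : z ≠ 0) :
    ∃ k, 0 < k ∧ k ≤ s.card ∧ s.esymm k ≠ 0 := by
  by_contra! h
  have hs : 0 < s.card := Multiset.card_pos_iff_exists_mem.2 ⟨z, hz⟩
  rw [eq_replicate_add_nthRoots_of_esymm_eq_zero hs le_rfl fun j hj hjs _ ↦ h j hj hjs,
    h _ hs le_rfl, tsub_self, Multiset.replicate_zero, zero_add, mul_zero, mem_nthRoots hs] at hz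
  exact hz0 (eq_zero_of_pow_eq_zero hz)

lemma exists_forall_ne_esymm_eq_zero (hs5 : s.card = 5) (h1 : s.esymm 1 = 0) (h2 : s.esymm 2 = 0)
    {z : R} (hz : z ∈ s) (hz0 : z ≠ 0) {c : R} (hc1 : c ≠ 1) (hc : s.map (c • ·) = s) :
    ∃ k, 3 ≤ k ∧ k ≤ 5 ∧ s.esymm k ≠ 0 ∧ ∀ j, 0 < j → j ≤ 5 → j ≠ k → s.esymm j = 0 := by
  have three_le {j : ℕ} (hj0 : 0 < j) (hj : s.esymm j ≠ 0) : 3 ≤ j := by grind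
  obtain ⟨k, hk0, hk5, hk⟩ := exists_esymm_ne_zero hz hz0
  rw [hs5] at hk5
  refine ⟨k, three_le hk0 hk, hk5, hk, fun j hj0 hj5 hjk ↦ by_contra fun hj ↦ hc1 ?_⟩
  have coprime : j.Coprime k := by
    have hj3 := three_le hj0 hj
    have hk3 := three_le hk0 hk
    interval_cases j <;> interval_cases k <;> first | contradiction | decide
  rw [← pow_one c, ← coprime.gcd_eq_one]
  exact pow_gcd_eq_one.2 ⟨pow_eq_one_of_esymm_ne_zero hc hj, pow_eq_one_of_esymm_ne_zero hc hk⟩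

end Domain

lemma prod_count_factorial_of_esymm_eq_zero {F : Type*} [Field F] [DecidableEq F]
    {s : Multiset F} {k : ℕ} (hk0 : (k : F) ≠ 0) (hks : k ≤ s.card) (hk : s.esymm k ≠ 0)
    (hs : ∀ j, 0 < j → j ≤ s.card → j ≠ k → s.esymm j = 0) :
    ∏ z ∈ s.toFinset, (s.count z)! = (s.card - k)! := by
  have hk_pos : 0 < k := Nat.pos_of_ne_zero fun h ↦ hk0 (by simp [h])
  set a := (-1) ^ (k + 1) * s.esymm k with ha
  have ha0 : a ≠ 0 := by simpa [ha] using hk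
  have hs_eq := eq_replicate_add_nthRoots_of_esymm_eq_zero hk_pos hks hs
  have count_zero : s.count 0 = s.card - k := by
    have zero_notMem : 0 ∉ nthRoots k a := by
      simpa [mem_nthRoots hk_pos, hk_pos.ne'] using ha0.symm
    conv_lhs => rw [hs_eq]
    rw [Multiset.count_add, Multiset.count_replicate_self,
      Multiset.count_eq_zero_of_notMem zero_notMem, add_zero]
  have count_le_one (z : F) (hz : z ≠ 0) : s.count z ≤ 1 := by
    rw [hs_eq, Multiset.count_add, Multiset.count_replicate, if_neg hz.symm, zero_add]
    exact Multiset.nodup_iff_count_le_one.1 (nodup_roots (separable_X_pow_sub_C a hk0 ha0)) z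
  rw [← count_zero]
  refine prod_eq_single 0 (fun z _ hz ↦ Nat.factorial_eq_one.2 (count_le_one z hz)) fun h ↦ ?_
  rw [Multiset.count_eq_zero_of_notMem (by simpa using h), Nat.factorial_zero]

end ElementarySymmetric

lemma factorial_sq_le_two_pow_of_le_two {n : ℕ} (hn : n ≤ 2) : n ! ^ 2 ≤ 2 ^ n := by
  interval_cases n <;> decide

section CountFactorial

variable {α : Type*} [DecidableEq α]

lemma prod_count_factorial_four_eq {a b : α} (hba : b ≠ a) :
    ∏ z ∈ ({b, a, a, a, a} : Multiset α).toFinset, (Multiset.count z {b, a, a, a, a})! = 24 := by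
  simp [hba, hba.symm, Nat.factorial]

lemma prod_count_factorial_three_eq {a b : α} (hba : b ≠ a) :
    ∏ z ∈ ({b, b, a, a, a} : Multiset α).toFinset, (Multiset.count z {b, b, a, a, a})! = 12 := by
  simp [hba, hba.symm, Nat.factorial]

lemma exists_two_lt_count {s : Multiset α}
    (hs : 2 ^ s.card < (∏ a ∈ s.toFinset, (s.count a)!) ^ 2) : ∃ a, 2 < s.count a := by
  by_contra! h
  refine hs.not_ge ?_
  calc (∏ a ∈ s.toFinset, (s.count a)!) ^ 2 = ∏ a ∈ s.toFinset, (s.count a)! ^ 2 := by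
        rw [Finset.prod_pow]
    _ ≤ ∏ a ∈ s.toFinset, 2 ^ s.count a :=
        Finset.prod_le_prod' fun a _ ↦ factorial_sq_le_two_pow_of_le_two (h a)
    _ = 2 ^ s.card := by rw [Finset.prod_pow_eq_pow_sum, Multiset.toFinset_sum_count_eq]

lemma exists_eq_of_six_lt_prod_count_factorial {s : Multiset α} (hs5 : s.card = 5)
    (hs : 6 < ∏ a ∈ s.toFinset, (s.count a)!) :
    ∃ a b, s = {b, a, a, a, a} ∨ s = {b, b, a, a, a} := by
  obtain ⟨a, ha⟩ := exists_two_lt_count (s := s) (by rw [hs5]; nlinarith)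
  obtain ⟨t, rfl⟩ := Multiset.le_iff_exists_add.1 (Multiset.le_count_iff_replicate_le.1 ha)
  obtain ⟨b, c, rfl⟩ := Multiset.card_eq_two.1 (show t.card = 2 by simpa using hs5)
  by_cases hbc : b = c
  · exact ⟨a, b, .inr (by rw [hbc, add_comm]; rfl)⟩
  by_cases hba : b = a
  · exact ⟨a, c, .inl (by rw [hba, Multiset.pair_comm, add_comm]; rfl)⟩
  by_cases hca : c = a
  · exact ⟨a, b, .inl (by rw [hca, add_comm]; rfl)⟩
  · refine absurd hs (not_lt.2 (le_of_eq ?_))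
    have count_a : (Multiset.replicate 3 a + {b, c}).count a = 3 := by
      simp [Ne.symm hba, Ne.symm hca]
    rw [Finset.prod_eq_single_of_mem a (by simp) fun z _ hza ↦ ?_, count_a]
    · rfl
    · rw [Multiset.count_add, Multiset.count_replicate, if_neg (Ne.symm hza), zero_add]
      exact Nat.factorial_eq_one.2 (Multiset.nodup_iff_count_le_one.1 (by simpa using hbc) z)

end CountFactorial

section PermutationCharacter

variable {ι F : Type*} [Fintype ι] [Field F] {v : ι → F}

lemma map_smul_map_univ_eq_of_smul_eq {g : (Perm ι)ᵈᵐᵃ} {c : F} (h : c • v = g • v) :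
    (univ.val.map v).map (c • ·) = univ.val.map v := by
  calc (univ.val.map v).map (c • ·) = univ.val.map (g • v) := by rw [Multiset.map_map, ← h]; rfl
    _ = (univ.val.map (DomMulAct.mk.symm g : Perm ι)).map v := by rw [Multiset.map_map]; rfl
    _ = univ.val.map v := by rw [Multiset.map_univ_val_equiv]

variable (hv : v ≠ 0)

lemma map_stabilizerCharacter_smul_map_univ (g : stabilizer (Perm ι)ᵈᵐᵃ (mk F v hv)) :
    (univ.val.map v).map ((stabilizerCharacter (Perm ι)ᵈᵐᵃ F hv g : F) • ·) = univ.val.map v :=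
  map_smul_map_univ_eq_of_smul_eq (stabilizerCharacter_smul hv g)

lemma stabilizerCharacter_pow_eq_one (g : stabilizer (Perm ι)ᵈᵐᵃ (mk F v hv)) {k : ℕ}
    (hk : (univ.val.map v).esymm k ≠ 0) : stabilizerCharacter (Perm ι)ᵈᵐᵃ F hv g ^ k = 1 :=
  Units.ext <| by
    rw [Units.val_pow_eq_pow_val, Units.val_one,
      pow_eq_one_of_esymm_ne_zero (map_stabilizerCharacter_smul_map_univ hv g) hk]

lemma card_range_stabilizerCharacter_le {k : ℕ} [NeZero k] (hk : (univ.val.map v).esymm k ≠ 0) :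
    Nat.card (stabilizerCharacter (Perm ι)ᵈᵐᵃ F hv).range ≤ k := by
  have range_le : (stabilizerCharacter (Perm ι)ᵈᵐᵃ F hv).range ≤ rootsOfUnity k F := by
    rintro _ ⟨g, rfl⟩
    exact stabilizerCharacter_pow_eq_one hv g hk
  exact (Subgroup.card_le_of_le range_le).trans (card_rootsOfUnity F k)

lemma card_stabilizer_mk_of_stabilizerCharacter_eq_one [DecidableEq F]
    (hχ : stabilizerCharacter (Perm ι)ᵈᵐᵃ F hv = 1) :
    Nat.card (stabilizer (Perm ι)ᵈᵐᵃ (mk F v hv)) =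
      ∏ z ∈ (univ.val.map v).toFinset, ((univ.val.map v).count z)! := by
  rw [card_stabilizer_mk, hχ, MonoidHom.range_one, Subgroup.card_bot, mul_one,
    card_stabilizer_eq_prod_count_factorial]

lemma stabilizerCharacter_eq_one_of_sum_ne_zero (hsum : ∑ i, v i ≠ 0) :
    stabilizerCharacter (Perm ι)ᵈᵐᵃ F hv = 1 :=
  MonoidHom.ext fun g ↦ by
    rw [← pow_one (stabilizerCharacter (Perm ι)ᵈᵐᵃ F hv g), MonoidHom.one_apply,
      stabilizerCharacter_pow_eq_one hv g (by rwa [esymm_one_map_univ])]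

end PermutationCharacter

lemma card_stabilizer_mk_le_six {F : Type*} [Field F] [CharZero F] {v : Fin 5 → F} (hv : v ≠ 0)
    (hq : ∑ j, v j ^ 2 = 0) (hχ : stabilizerCharacter (Perm (Fin 5))ᵈᵐᵃ F hv ≠ 1) :
    Nat.card (stabilizer (Perm (Fin 5))ᵈᵐᵃ (mk F v hv)) ≤ 6 := by
  classical
  set s := univ.val.map v with hs
  have s_card : s.card = 5 := by simp [hs]
  have sum_eq_zero : ∑ j, v j = 0 :=
    not_not.1 (mt (stabilizerCharacter_eq_one_of_sum_ne_zero hv) hχ)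
  have e1 : s.esymm 1 = 0 := by rw [esymm_one_map_univ, sum_eq_zero]
  have e2 : s.esymm 2 = 0 := by
    refine (mul_eq_zero_iff_left two_ne_zero).1 ((two_mul_esymm_two_map_univ v).trans ?_)
    rw [sum_eq_zero, hq, zero_pow two_ne_zero, sub_zero]
  obtain ⟨g, hg⟩ := DFunLike.ne_iff.1 hχ
  obtain ⟨j, hj⟩ := Function.ne_iff.1 hv
  obtain ⟨k, hk3, hk5, hk, hk_unique⟩ := exists_forall_ne_esymm_eq_zero s_card e1 e2
    (Multiset.mem_map_of_mem v (mem_univ_val j)) hj (mt Units.val_eq_one.1 hg)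
    (map_stabilizerCharacter_smul_map_univ hv g)
  have : NeZero k := ⟨by lia⟩
  calc Nat.card (stabilizer (Perm (Fin 5))ᵈᵐᵃ (mk F v hv))
      = (5 - k)! * Nat.card (stabilizerCharacter (Perm (Fin 5))ᵈᵐᵃ F hv).range := by
        rw [card_stabilizer_mk, card_stabilizer_eq_prod_count_factorial,
          prod_count_factorial_of_esymm_eq_zero (NeZero.ne _) (by rwa [s_card]) hk
            (by rwa [s_card]), s_card]
    _ ≤ (5 - k)! * k := Nat.mul_le_mul_left _ (card_range_stabilizerCharacter_le hv hk)
    _ ≤ 6 := by interval_cases k <;> decide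

lemma sum_vec_three_eq {R : Type*} [CommSemiring R] (x y z : R) :
    ∑ j, ![x, y, z, z, z] j = x + y + 3 * z := by
  simp only [Fin.sum_univ_five, Matrix.cons_val_zero, Matrix.cons_val_one, Matrix.cons_val]
  ring

lemma sum_sq_vec_three_eq {R : Type*} [CommSemiring R] (x y z : R) :
    ∑ j, ![x, y, z, z, z] j ^ 2 = x ^ 2 + y ^ 2 + 3 * z ^ 2 := by
  simp only [Fin.sum_univ_five, Matrix.cons_val_zero, Matrix.cons_val_one, Matrix.cons_val]
  ring

lemma eq_smul_of_sum_sq_eq_zero_of_four_eq {F : Type*} [Field F] {i a b : F} (hi : i ^ 2 = -1)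
    (hq : ∑ j, ![b, a, a, a, a] j ^ 2 = 0) :
    ![b, a, a, a, a] = a • ![2 * i, 1, 1, 1, 1] ∨
      ![b, a, a, a, a] = a • ![-(2 * i), 1, 1, 1, 1] := by
  have hb : b ^ 2 = (a * (2 * i)) ^ 2 := by
    rw [sum_sq_vec_three_eq] at hq
    linear_combination hq - 4 * a ^ 2 * hi
  refine (sq_eq_sq_iff_eq_or_eq_neg.1 hb).imp ?_ ?_ <;> rintro rfl <;> simp

lemma eq_smul_of_sum_sq_eq_zero_of_three_eq {F : Type*} [Field F] [CharZero F] {α a b : F}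
    (hα : α ^ 2 = -(3 / 2)) (hq : ∑ j, ![b, b, a, a, a] j ^ 2 = 0) :
    ![b, b, a, a, a] = a • ![α, α, 1, 1, 1] ∨ ![b, b, a, a, a] = a • ![-α, -α, 1, 1, 1] := by
  have hb : b ^ 2 = (a * α) ^ 2 := by
    rw [sum_sq_vec_three_eq] at hq
    linear_combination hq / 2 - a ^ 2 * hα
  refine (sq_eq_sq_iff_eq_or_eq_neg.1 hb).imp ?_ ?_ <;> rintro rfl <;> simp

lemma submodule_coe_injective {K V : Type*} [DivisionRing K] [AddCommGroup V] [Module K V] :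
    Function.Injective fun p : ℙ K V ↦ (p.submodule : Set V) :=
  SetLike.coe_injective.comp submodule_injective

section Orb

variable {v : Fin 5 → ℂ} (hv : v ≠ 0)

lemma orb_eq_image_orbit :
    orb v = (fun p ↦ (p.submodule : Set (Fin 5 → ℂ))) '' orbit (Perm (Fin 5))ᵈᵐᵃ (mk ℂ v hv) := by
  rw [orbit, ← Set.range_comp, ← DomMulAct.mk.surjective.range_comp]
  refine congrArg Set.range (funext fun σ ↦ Set.ext fun w ↦ ?_)
  simp only [Set.mem_ofPred_eq, smul_mk, Function.comp_apply, submodule_mk, SetLike.mem_coe,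
    Submodule.mem_span_singleton, eq_comm]
  rfl

lemma ncard_orb_mul_card_stabilizer_mk :
    (orb v).ncard * Nat.card (stabilizer (Perm (Fin 5))ᵈᵐᵃ (mk ℂ v hv)) = 120 := by
  rw [orb_eq_image_orbit hv, Set.ncard_image_of_injective _ submodule_coe_injective,
    ← index_stabilizer, mul_comm, Subgroup.card_mul_index, Nat.card_congr DomMulAct.mk.symm,
    Nat.card_perm, Nat.card_fin]
  rfl

end Orb

lemma ncard_orb_mul_prod_count_factorial {v : Fin 5 → ℂ} (hsum : ∑ j, v j ≠ 0) :
    (orb v).ncard * ∏ z ∈ (univ.val.map v).toFinset, ((univ.val.map v).count z)! = 120 := by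
  have hv : v ≠ 0 := by
    rintro rfl
    exact hsum (by simp)
  rw [← card_stabilizer_mk_of_stabilizerCharacter_eq_one hv
    (stabilizerCharacter_eq_one_of_sum_ne_zero hv hsum), ncard_orb_mul_card_stabilizer_mk]

lemma ncard_orb_of_four_eq_one {b : ℂ} (hb : b ≠ 1) (hsum : b + 4 ≠ 0) :
    (orb ![b, 1, 1, 1, 1]).ncard = 5 := by
  have orbit_stabilizer := ncard_orb_mul_prod_count_factorial (v := ![b, 1, 1, 1, 1]) fun h ↦
    hsum (by rw [← h, sum_vec_three_eq]; ring)
  have coordinates : univ.val.map ![b, 1, 1, 1, 1] = {b, 1, 1, 1, 1} := rfl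
  rw [coordinates, prod_count_factorial_four_eq hb] at orbit_stabilizer
  lia

lemma ncard_orb_of_three_eq_one {b : ℂ} (hb : b ≠ 1) (hsum : 2 * b + 3 ≠ 0) :
    (orb ![b, b, 1, 1, 1]).ncard = 10 := by
  have orbit_stabilizer := ncard_orb_mul_prod_count_factorial (v := ![b, b, 1, 1, 1]) fun h ↦
    hsum (by rw [← h, sum_vec_three_eq]; ring)
  have coordinates : univ.val.map ![b, b, 1, 1, 1] = {b, b, 1, 1, 1} := rfl
  rw [coordinates, prod_count_factorial_three_eq hb] at orbit_stabilizer
  lia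

lemma exists_map_univ_eq_of_ncard_orb_lt {v : Fin 5 → ℂ} (hv : v ≠ 0)
    (hq : ∑ j, v j ^ 2 = 0) (h20 : (orb v).ncard < 20) :
    ∃ a b, univ.val.map v = {b, a, a, a, a} ∨ univ.val.map v = {b, b, a, a, a} := by
  have orbit_stabilizer := ncard_orb_mul_card_stabilizer_mk hv
  have six_lt : 6 < Nat.card (stabilizer (Perm (Fin 5))ᵈᵐᵃ (mk ℂ v hv)) := by nlinarith
  have hχ := not_not.1 (mt (card_stabilizer_mk_le_six hv hq) six_lt.not_ge)
  rw [card_stabilizer_mk_of_stabilizerCharacter_eq_one hv hχ] at six_lt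
  exact exists_eq_of_six_lt_prod_count_factorial (by simp) six_lt

lemma exists_comp_perm_eq_smul_of_ncard_orb_lt {v : Fin 5 → ℂ} (hv : v ≠ 0)
    (hq : ∑ j, v j ^ 2 = 0) {i α : ℂ} (hi : i ^ 2 = -1) (hα : α ^ 2 = -(3 / 2))
    (h20 : (orb v).ncard < 20) :
    ∃ (σ : Perm (Fin 5)) (c : ℂ), c ≠ 0 ∧
      (v ∘ σ = c • ![2 * i, 1, 1, 1, 1] ∨ v ∘ σ = c • ![-(2 * i), 1, 1, 1, 1] ∨
        v ∘ σ = c • ![α, α, 1, 1, 1] ∨ v ∘ σ = c • ![-α, -α, 1, 1, 1]) := by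
  have comp_ne_zero (σ : Perm (Fin 5)) : v ∘ σ ≠ 0 := fun h ↦
    hv (σ.surjective.injective_comp_right h)
  have comp_quadric (σ : Perm (Fin 5)) : ∑ j, (v ∘ σ) j ^ 2 = 0 :=
    (Equiv.sum_comp σ (v · ^ 2)).trans hq
  obtain ⟨a, b, h | h⟩ := exists_map_univ_eq_of_ncard_orb_lt hv hq h20
  · obtain ⟨σ, hσ⟩ := exists_perm_comp_eq_of_map_univ_eq_s7 (g := ![b, a, a, a, a]) h
    have eq_smul := eq_smul_of_sum_sq_eq_zero_of_four_eq hi (hσ ▸ comp_quadric σ)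
    rw [← hσ] at eq_smul
    exact ⟨σ, a, fun ha ↦ comp_ne_zero σ (by simpa [ha] using eq_smul), by tauto⟩
  · obtain ⟨σ, hσ⟩ := exists_perm_comp_eq_of_map_univ_eq_s7 (g := ![b, b, a, a, a]) h
    have eq_smul := eq_smul_of_sum_sq_eq_zero_of_three_eq hα (hσ ▸ comp_quadric σ)
    rw [← hσ] at eq_smul
    exact ⟨σ, a, fun ha ↦ comp_ne_zero σ (by simpa [ha] using eq_smul), by tauto⟩

lemma sum_eq_sum_of_majority_eq_one {ι R : Type*} [Fintype ι] [DecidableEq R] [Semiring R]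
    {v w : ι → R} (hv : Fintype.card ι < 2 * #{j | v j = 1})
    (hw : Fintype.card ι < 2 * #{j | w j = 1}) {σ : Perm ι} {c : R} (h : w = c • (v ∘ σ)) :
    ∑ j, w j = ∑ j, v j := by
  classical
  have card_comp : #{j | v (σ j) = 1} = #{j | v j = 1} := card_equiv σ (by simp)
  obtain ⟨j, hj⟩ := inter_nonempty_of_card_lt_card_add_card (filter_subset (w · = 1) univ)
    (filter_subset (fun j ↦ v (σ j) = 1) univ) (by rw [card_univ]; lia)
  obtain ⟨hwj, hvj⟩ : w j = 1 ∧ v (σ j) = 1 := by simpa using hj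
  have hc : c = 1 := by simpa [hwj, hvj] using (congrFun h j).symm
  rw [h, hc, one_smul, ← Equiv.sum_comp σ v]
  rfl

lemma exists_eq_smul_comp_of_inter_orb_nonempty {v w : Fin 5 → ℂ} (h : (orb v ∩ orb w).Nonempty) :
    ∃ (σ : Perm (Fin 5)) (c : ℂ), w = c • (v ∘ σ) := by
  obtain ⟨_, ⟨σ, rfl⟩, τ, hτ⟩ := h
  obtain ⟨c, hc⟩ : w ∘ τ ∈ {u | ∃ c : ℂ, u = c • (v ∘ σ)} :=
    Set.ext_iff.1 hτ _ |>.1 ⟨1, (one_smul ..).symm⟩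
  refine ⟨τ.symm.trans σ, c, funext fun j ↦ ?_⟩
  simpa using congrFun hc (τ.symm j)

lemma orb_inter_orb_eq_empty_of_add_ne {x y x' y' : ℂ} (h : x + y ≠ x' + y') :
    orb ![x, y, 1, 1, 1] ∩ orb ![x', y', 1, 1, 1] = ∅ := by
  have majority (x y : ℂ) : Fintype.card (Fin 5) < 2 * #{j | ![x, y, 1, 1, 1] j = (1 : ℂ)} := by
    calc 5 < 2 * #({2, 3, 4} : Finset (Fin 5)) := by decide
      _ ≤ 2 * #{j | ![x, y, 1, 1, 1] j = (1 : ℂ)} :=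
        Nat.mul_le_mul_left 2 (card_le_card (by simp [insert_subset_iff]))
  by_contra hne
  obtain ⟨σ, c, hc⟩ :=
    exists_eq_smul_comp_of_inter_orb_nonempty (Set.nonempty_iff_ne_empty.2 hne)
  have := sum_eq_sum_of_majority_eq_one (majority x y) (majority x' y') hc
  rw [sum_vec_three_eq, sum_vec_three_eq] at this
  exact h (add_right_cancel this).symm

/-- Lemma 3.6 (small orbits on the quadric): any `S₅`-orbit of length `< 20` on the
quadric `{x₀² + ⋯ + x₄² = 0} ⊂ ℙ⁴` is one of `Σ₅`, `Σ₅′`, `Σ₁₀`, `Σ₁₀′`, i.e. the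
orbit of one of the points `(±2i,1,1,1,1)`, `(±α,±α,1,1,1)` with `i² = −1`,
`α² = −3/2`; these four points lie on the quadric, their orbits have lengths
`5, 5, 10, 10`, and the four orbits are pairwise disjoint. -/
theorem stmt_7 (v : Fin 5 → ℂ) (hv : v ≠ 0) (hq : ∑ j, v j ^ 2 = 0)
    (i α : ℂ) (hi : i ^ 2 = -1) (hα : α ^ 2 = -(3 / 2)) :
    ∀ (w₁ w₂ w₃ w₄ : Fin 5 → ℂ),
      w₁ = ![2 * i, 1, 1, 1, 1] → w₂ = ![-(2 * i), 1, 1, 1, 1] →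
      w₃ = ![α, α, 1, 1, 1] → w₄ = ![-α, -α, 1, 1, 1] →
      (((orb v).ncard < 20 →
          ∃ σ : Equiv.Perm (Fin 5), ∃ c : ℂ, c ≠ 0 ∧
            (v ∘ ⇑σ = c • w₁ ∨ v ∘ ⇑σ = c • w₂ ∨ v ∘ ⇑σ = c • w₃ ∨ v ∘ ⇑σ = c • w₄)) ∧
        (∑ j, w₁ j ^ 2 = 0) ∧ (∑ j, w₂ j ^ 2 = 0) ∧
        (∑ j, w₃ j ^ 2 = 0) ∧ (∑ j, w₄ j ^ 2 = 0) ∧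
        (orb w₁).ncard = 5 ∧ (orb w₂).ncard = 5 ∧
        (orb w₃).ncard = 10 ∧ (orb w₄).ncard = 10 ∧
        orb w₁ ∩ orb w₂ = ∅ ∧ orb w₁ ∩ orb w₃ = ∅ ∧ orb w₁ ∩ orb w₄ = ∅ ∧
        orb w₂ ∩ orb w₃ = ∅ ∧ orb w₂ ∩ orb w₄ = ∅ ∧ orb w₃ ∩ orb w₄ = ∅) := by
  rintro _ _ _ _ rfl rfl rfl rfl
  refine ⟨exists_comp_perm_eq_smul_of_ncard_orb_lt hv hq hi hα, ?_, ?_, ?_, ?_,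
    ncard_orb_of_four_eq_one (by grind) (by grind), ncard_orb_of_four_eq_one (by grind) (by grind),
    ncard_orb_of_three_eq_one (by grind) (by grind),
    ncard_orb_of_three_eq_one (by grind) (by grind),
    orb_inter_orb_eq_empty_of_add_ne (by grind), orb_inter_orb_eq_empty_of_add_ne (by grind),
    orb_inter_orb_eq_empty_of_add_ne (by grind), orb_inter_orb_eq_empty_of_add_ne (by grind),
    orb_inter_orb_eq_empty_of_add_ne (by grind), orb_inter_orb_eq_empty_of_add_ne (by grind)⟩ <;>
    rw [sum_sq_vec_three_eq]
  · linear_combination 4 * hi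
  · linear_combination 4 * hi
  · linear_combination 2 * hα
  · linear_combination 2 * hα
end
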